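/- Let k be a commutative ring which is not a Q-algebra, and let C be a cyclic group such that C ⊗_ℤ k ≠ 0. Then k has a quotient field 𝔽 of positive characteristic p (i.e. there is a surjective ring homomorphism k → 𝔽 onto a field 𝔽 with char 𝔽 = p > 0) such that C ⊗_ℤ 𝔽 ≅ 𝔽. -/

import Mathlib

open scoped TensorProduct

/-!
Write `n = Nat.card C`, so that `C ≅ ℤ/n` (with `n = 0` when `C` is infinite). Some prime `p ∣ n`
is not invertible in `k`: if `n = 0` this is the failure of `k` to be a `ℚ`-algebra, and if `n ≠ 0`
it holds because an invertible `n` would annihilate `C ⊗ k` (`not_isUnit_card`). The residue field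
`𝔽` of a maximal ideal containing `p` has characteristic `p`, and since `p ∣ n` the element `n`
vanishes in `𝔽`, so that `𝔽 ⊗ ℤ/n ≅ 𝔽 / n𝔽 = 𝔽` (`tensorZModEquiv`).
-/

/-- A positive integer which is not invertible in `k` has a prime factor not invertible in `k`. -/
theorem exists_prime_dvd_not_isUnit {k : Type} [CommRing k] {m : ℕ} (hm : m ≠ 0)
    (hu : ¬ IsUnit (m : k)) : ∃ p : ℕ, p.Prime ∧ p ∣ m ∧ ¬ IsUnit (p : k) := by
  by_contra! h
  apply hu
  rw [← Nat.prod_primeFactorsList hm, Nat.cast_list_prod]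
  refine (Submonoid.list_prod_mem (IsUnit.submonoid k) ?_)
  intro x hx
  obtain ⟨p, hp, rfl⟩ := List.mem_map.1 hx
  exact h p (Nat.prime_of_mem_primeFactorsList hp) (Nat.dvd_of_mem_primeFactorsList hp)

/-- If all positive integers were invertible in `k`, then `ℤ → k` would extend to `ℚ`. -/
theorem exists_not_isUnit {k : Type} [CommRing k] (hk : IsEmpty (ℚ →+* k)) :
    ∃ m : ℕ, m ≠ 0 ∧ ¬ IsUnit (m : k) := by
  by_contra! h
  refine hk.false (IsLocalization.lift (M := nonZeroDivisors ℤ) (g := Int.castRingHom k) ?_)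
  rintro ⟨z, hz⟩
  have hz0 : z ≠ 0 := nonZeroDivisors.ne_zero hz
  have := h z.natAbs (Int.natAbs_ne_zero.2 hz0)
  rcases Int.natAbs_eq z with e | e
  · change IsUnit ((z : ℤ) : k)
    rw [e]; simpa using this
  · change IsUnit ((z : ℤ) : k)
    rw [e]; simpa using this

/-- The order of `C` kills `C ⊗ k`, so it is not invertible. For infinite `C` the order reads `0`,
and the claim is that `k` is nontrivial. -/
theorem not_isUnit_card {k C : Type} [CommRing k] [AddCommGroup C]
    (hC : Nontrivial (C ⊗[ℤ] k)) : ¬ IsUnit ((Nat.card C : ℕ) : k) := by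
  rintro ⟨u, hu⟩
  refine not_subsingleton (C ⊗[ℤ] k) (subsingleton_of_forall_eq 0 fun t => ?_)
  induction t with
  | zero => rfl
  | add a b ha hb => rw [ha, hb, add_zero]
  | tmul c x =>
    have hx : x = (Nat.card C : ℤ) • ((↑u⁻¹ : k) * x) := by
      rw [zsmul_eq_mul, Int.cast_natCast, ← hu, Units.mul_inv_cancel_left]
    rw [hx, TensorProduct.tmul_smul, TensorProduct.smul_tmul', natCast_zsmul,
      card_nsmul_eq_zero', TensorProduct.zero_tmul]

/-- If `p ∣ n` and `F` has characteristic `p`, then `F ⊗ ℤ/n ≅ F`, through `x ⊗ a ↦ a x`. -/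
noncomputable def tensorZModEquiv (F : Type) [Field F] (n p : ℕ) [CharP F p] (h : p ∣ n) :
    (F ⊗[ℤ] ZMod n) ≃ₗ[F] F :=
  LinearEquiv.ofLinearMap
    (LinearMap.liftBaseChange F (ZMod.castHom h F).toAddMonoidHom.toIntLinearMap)
    (LinearMap.toSpanSingleton F _ (1 ⊗ₜ[ℤ] (1 : ZMod n)))
    (by
      ext
      simp [ZMod.cast_one h])
    (by
      ext a
      obtain ⟨z, rfl⟩ := ZMod.intCast_surjective a
      have hz : (1 : F) ⊗ₜ[ℤ] (z : ZMod n) = (z : F) ⊗ₜ[ℤ] (1 : ZMod n) := by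
        rw [← zsmul_one z, ← zsmul_one z, TensorProduct.smul_tmul]
      simp [ZMod.cast_one h, hz, TensorProduct.smul_tmul'])

/-- **Statement 13.** If a commutative ring `k` is not a `ℚ`-algebra and `C` is a cyclic
(additive) group with `C ⊗_ℤ k ≠ 0`, then `k` has a quotient field `𝔽` of positive
characteristic `p` (a surjective ring homomorphism `k →+* 𝔽` onto a field of characteristic
`p > 0`) such that `C ⊗_ℤ 𝔽 ≅ 𝔽` (a one-dimensional `𝔽`-vector space). -/
theorem quotient_field_of_not_rat_algebra
    (k : Type) [CommRing k] (hk : IsEmpty (ℚ →+* k))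
    (C : Type) [AddCommGroup C] [IsAddCyclic C]
    (hC : Nontrivial (C ⊗[ℤ] k)) :
    ∃ (𝔽 : Type) (_ : Field 𝔽) (φ : k →+* 𝔽) (p : ℕ),
      Function.Surjective φ ∧ 0 < p ∧ CharP 𝔽 p ∧
      Nonempty ((𝔽 ⊗[ℤ] C) ≃ₗ[𝔽] 𝔽) := by
  obtain ⟨p, hp, hpn, hpu⟩ : ∃ p : ℕ, p.Prime ∧ p ∣ Nat.card C ∧ ¬ IsUnit (p : k) := by
    by_cases hn : Nat.card C = 0
    · obtain ⟨m, hm, hmu⟩ := exists_not_isUnit hk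
      obtain ⟨p, hp, -, hpu⟩ := exists_prime_dvd_not_isUnit hm hmu
      exact ⟨p, hp, hn ▸ dvd_zero p, hpu⟩
    · exact exists_prime_dvd_not_isUnit hn (not_isUnit_card hC)
  obtain ⟨M, hM, hpM⟩ := exists_max_ideal_of_mem_nonunits hpu
  let _ : Field (k ⧸ M) := Ideal.Quotient.field M
  have hp0 : ((p : ℕ) : k ⧸ M) = 0 := by
    rw [← map_natCast (Ideal.Quotient.mk M)]
    exact Ideal.Quotient.eq_zero_iff_mem.2 hpM
  have : CharP (k ⧸ M) p := (CharP.charP_iff_prime_eq_zero hp).2 hp0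
  refine ⟨k ⧸ M, inferInstance, Ideal.Quotient.mk M, p, Ideal.Quotient.mk_surjective, hp.pos,
    inferInstance, ⟨?_⟩⟩
  exact (LinearEquiv.baseChange ℤ (k ⧸ M) _ _
    (zmodAddCyclicAddEquiv ‹IsAddCyclic C›).symm.toIntLinearEquiv).trans
    (tensorZModEquiv (k ⧸ M) (Nat.card C) p hpn)
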